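/- Let a(x) = −x² log|x| for x ≠ 0 and a(0) = 0, and define h(x, y) = a(1) + a(x) − a(1 − y) − a(x + y). Then there exists a constant C > 0 such that |h(x, y)| ≤ C |x + y − 1| y for all (x, y) in R. -/

import Mathlib

/-!
Write `φ t = a (t + y) - a t`. Then `h(x, y) = φ (1 - y) - φ x`, a second-order difference of `a`.
On the region, `x`, `1 - y`, `x + y` and `1` all lie in `[1/3, 3/2]`, away from the singularity
of `a` at `0`, and there `|a''| = |2 log t + 3| ≤ 4`. The mean value inequality for `a'` gives
`|φ'| ≤ 4 y`, and the one for `φ` then gives `|h(x, y)| ≤ 4 y |x + y - 1|`.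
-/

/-- The feasible region `R = {(x,y) : 0 ≤ y ≤ x ≤ 1, 1 ≤ x + 2y ≤ 2}`. -/
def regionR : Set (ℝ × ℝ) :=
  {p | 0 ≤ p.2 ∧ p.2 ≤ p.1 ∧ p.1 ≤ 1 ∧ 1 ≤ p.1 + 2 * p.2 ∧ p.1 + 2 * p.2 ≤ 2}

/-- `a(x) = −x² log|x|` (with `a(0) = 0`, since `Real.log 0 = 0`). -/
noncomputable def aLog (t : ℝ) : ℝ := -t ^ 2 * Real.log |t|

/-- `h(x,y) = a(1) + a(x) − a(1 − y) − a(x + y)`. -/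
noncomputable def hfun (a : ℝ → ℝ) (x y : ℝ) : ℝ := a 1 + a x - a (1 - y) - a (x + y)

theorem hasDerivAt_aLog {t : ℝ} (ht : 0 < t) :
    HasDerivAt aLog (-2 * t * Real.log t - t) t := by
  have hfun_eq : aLog = fun t : ℝ => -t ^ 2 * Real.log t := by
    funext s
    simp [aLog, Real.log_abs]
  rw [hfun_eq]
  have h := ((hasDerivAt_pow 2 t).neg).mul (Real.hasDerivAt_log ht.ne')
  refine h.congr_deriv ?_
  simp only [Pi.neg_apply]
  field_simp
  norm_num
  ring

theorem hasDerivAt_deriv_aLog {t : ℝ} (ht : 0 < t) :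
    HasDerivAt (fun t : ℝ => -2 * t * Real.log t - t) (-2 * Real.log t - 3) t := by
  have h := (((hasDerivAt_id t).const_mul (-2)).mul (Real.hasDerivAt_log ht.ne')).sub
    (hasDerivAt_id t)
  refine h.congr_deriv ?_
  simp only [id]
  field_simp
  ring

/-- On `[1/3, 3/2]` the bounds `1 - 1/t ≤ log t ≤ t - 1` give `-2 ≤ log t ≤ 1/2`. -/
theorem abs_second_deriv_le {t : ℝ} (ht : t ∈ Set.Icc (1 / 3 : ℝ) (3 / 2)) :
    |-2 * Real.log t - 3| ≤ 4 := by
  obtain ⟨h1, h2⟩ := ht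
  have hpos : 0 < t := by linarith
  have hu := Real.log_le_sub_one_of_pos hpos
  have hl := Real.one_sub_inv_le_log_of_pos hpos
  have hinv : t⁻¹ ≤ 3 := by
    rw [inv_le_comm₀ hpos (by norm_num)]
    linarith
  rw [abs_le]
  constructor <;> linarith

theorem deriv_aLog_lipschitz {s t : ℝ} (hs : s ∈ Set.Icc (1 / 3 : ℝ) (3 / 2))
    (ht : t ∈ Set.Icc (1 / 3 : ℝ) (3 / 2)) :
    |(-2 * t * Real.log t - t) - (-2 * s * Real.log s - s)| ≤ 4 * |t - s| := by
  have h := (convex_Icc (1 / 3 : ℝ) (3 / 2)).norm_image_sub_le_of_norm_hasDerivWithin_le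
    (f := fun t : ℝ => -2 * t * Real.log t - t) (f' := fun t : ℝ => -2 * Real.log t - 3)
    (fun u hu => (hasDerivAt_deriv_aLog (by linarith [hu.1] : 0 < u)).hasDerivWithinAt)
    (fun u hu => (Real.norm_eq_abs _).trans_le (abs_second_deriv_le hu)) hs ht
  simpa only [Real.norm_eq_abs] using h

/-- Lemma A.2 for `a(x) = −x² log|x|`:
there is `C > 0` with `|h(x,y)| ≤ C |x+y−1| y` on `R`. -/
theorem statement3 :
    ∃ C : ℝ, 0 < C ∧ ∀ x y : ℝ, (x, y) ∈ regionR →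
      |hfun aLog x y| ≤ C * |x + y - 1| * y := by
  refine ⟨4, by norm_num, ?_⟩
  rintro x y ⟨hy, hyx, hx, h1, h2⟩
  simp only at hy hyx hx h1 h2
  have hderiv : ∀ t ∈ Set.Icc (1 / 3 : ℝ) (3 / 2 - y),
      HasDerivWithinAt (fun t => aLog (t + y) - aLog t)
        ((-2 * (t + y) * Real.log (t + y) - (t + y)) - (-2 * t * Real.log t - t))
        (Set.Icc (1 / 3 : ℝ) (3 / 2 - y)) t := by
    intro t ht
    have htpos : 0 < t := by linarith [ht.1]
    exact (((hasDerivAt_aLog (by linarith : 0 < t + y)).comp_add_const t y).sub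
      (hasDerivAt_aLog htpos)).hasDerivWithinAt
  have hbound : ∀ t ∈ Set.Icc (1 / 3 : ℝ) (3 / 2 - y),
      ‖(-2 * (t + y) * Real.log (t + y) - (t + y)) - (-2 * t * Real.log t - t)‖ ≤ 4 * y := by
    intro t ht
    have h := deriv_aLog_lipschitz (s := t) (t := t + y)
      ⟨ht.1, by linarith [ht.2]⟩ ⟨by linarith [ht.1], by linarith [ht.2]⟩
    rwa [add_sub_cancel_left, abs_of_nonneg hy] at h
  have h := (convex_Icc (1 / 3 : ℝ) (3 / 2 - y)).norm_image_sub_le_of_norm_hasDerivWithin_le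
    hderiv hbound (x := x) (y := 1 - y)
    ⟨by linarith, by linarith⟩ ⟨by linarith, by linarith⟩
  simp only [Real.norm_eq_abs, sub_add_cancel] at h
  have e1 : hfun aLog x y = aLog 1 - aLog (1 - y) - (aLog (x + y) - aLog x) := by
    unfold hfun
    ring
  have e2 : |1 - y - x| = |x + y - 1| := by
    rw [← abs_neg]
    congr 1
    ring
  rw [e1]
  rw [e2] at h
  linarith
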